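/- The merit function θ : ℝⁿ × ℝ^q → ℝ defined by θ(z,v) = ½‖F(z,v)‖² = ½‖Hz + f + Aᵀv‖² + ½ Σ_{i=1}^q φ(v_i, y_i(z))² is continuously differentiable on all of ℝⁿ × ℝ^q, even though F itself is not everywhere differentiable. -/

import Mathlib

/-!
Since `φ(a,b)² = (a + b)² + (a² + b²) - 2 (a + b) √(a² + b²)`, the only term of the merit function
that is not polynomial is `(a + b) r` with `r = √(a² + b²)`, composed with affine maps. Away from
the origin it is smooth, with partial derivatives `r + (a + b) a / r` and `r + (a + b) b / r`. At
the origin it is bounded by a multiple of the squared norm, so its derivative vanishes there; and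
the partial derivatives tend to `0` at the origin because `|a / r|, |b / r| ≤ 1`. Hence `(a + b) r`
is `C¹` on the plane (`contDiff_sum_mul_sqrt`), and so is `φ²`.
-/

open Matrix

/-- The (non-smooth) Fischer–Burmeister function `φ(a,b) = a + b - √(a² + b²)`. -/
noncomputable def phiFB (a b : ℝ) : ℝ := a + b - Real.sqrt (a ^ 2 + b ^ 2)

/-- The merit function
`θ(z,v) = ½‖F(z,v)‖² = ½‖Hz + f + Aᵀv‖² + ½ Σᵢ φ(vᵢ, (b − Az)ᵢ)²` (Euclidean norm). -/
noncomputable def meritFB (n q : ℕ) (H : Matrix (Fin n) (Fin n) ℝ)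
    (A : Matrix (Fin q) (Fin n) ℝ) (f : Fin n → ℝ) (b : Fin q → ℝ)
    (x : (Fin n → ℝ) × (Fin q → ℝ)) : ℝ :=
  (1 / 2) * ∑ j, ((H.mulVec x.1 + f + Aᵀ.mulVec x.2) j) ^ 2 +
    (1 / 2) * ∑ i, (phiFB (x.2 i) ((b - A.mulVec x.1) i)) ^ 2

lemma sq_add_sq_pos_of_ne {p : ℝ × ℝ} (hp : p ≠ 0) : 0 < p.1 ^ 2 + p.2 ^ 2 := by
  by_contra! h
  refine hp (Prod.ext ?_ ?_) <;> simp <;> nlinarith [sq_nonneg p.1, sq_nonneg p.2]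

/-- Applied to `c = a` and `c = b`, this is the continuity of the terms `(a + b) a / r` and
`(a + b) b / r` of the partial derivatives. At the origin the factor `a + b = 0` makes the product
vanish whatever the value of the quotient, and `0` is also its limit since `|c / r| ≤ 1`. -/
lemma continuous_sum_mul_div_sqrt {c : ℝ × ℝ → ℝ} (hc : Continuous c)
    (hle : ∀ p, |c p| ≤ √(p.1 ^ 2 + p.2 ^ 2)) :
    Continuous fun p : ℝ × ℝ => (p.1 + p.2) * (c p / √(p.1 ^ 2 + p.2 ^ 2)) := by
  rw [continuous_iff_continuousAt]
  intro p
  by_cases hp : p = 0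
  · subst hp
    rw [ContinuousAt]
    simp only [Prod.fst_zero, Prod.snd_zero, add_zero, zero_mul]
    have h0 : Filter.Tendsto (fun p : ℝ × ℝ => |p.1 + p.2|) (nhds 0) (nhds 0) := by
      have : Continuous fun p : ℝ × ℝ => |p.1 + p.2| := by fun_prop
      simpa using this.tendsto 0
    refine squeeze_zero_norm (fun p => ?_) h0
    rw [Real.norm_eq_abs, abs_mul, abs_div, abs_of_nonneg (Real.sqrt_nonneg _)]
    exact mul_le_of_le_one_right (abs_nonneg _) (div_le_one_of_le₀ (hle p) (Real.sqrt_nonneg _))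
  · have := (Real.sqrt_pos.2 (sq_add_sq_pos_of_ne hp)).ne'
    have hc' := hc.continuousAt (x := p)
    have hs : ContinuousAt (fun p : ℝ × ℝ => √(p.1 ^ 2 + p.2 ^ 2)) p := by fun_prop
    exact (by fun_prop : ContinuousAt (fun p : ℝ × ℝ => p.1 + p.2) p).mul (hc'.div hs this)

/-- The derivative of `(a + b) √(a² + b²)`; at the origin all its terms vanish. -/
noncomputable def sumMulSqrtDeriv (p : ℝ × ℝ) : ℝ × ℝ →L[ℝ] ℝ :=
  (√(p.1 ^ 2 + p.2 ^ 2) + (p.1 + p.2) * (p.1 / √(p.1 ^ 2 + p.2 ^ 2))) •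
      ContinuousLinearMap.fst ℝ ℝ ℝ +
    (√(p.1 ^ 2 + p.2 ^ 2) + (p.1 + p.2) * (p.2 / √(p.1 ^ 2 + p.2 ^ 2))) •
      ContinuousLinearMap.snd ℝ ℝ ℝ

lemma continuous_sumMulSqrtDeriv : Continuous sumMulSqrtDeriv := by
  have h1 := continuous_sum_mul_div_sqrt continuous_fst fun p =>
    Real.abs_le_sqrt (by nlinarith [sq_nonneg p.2])
  have h2 := continuous_sum_mul_div_sqrt continuous_snd fun p =>
    Real.abs_le_sqrt (by nlinarith [sq_nonneg p.1])
  have hs : Continuous (fun p : ℝ × ℝ => √(p.1 ^ 2 + p.2 ^ 2)) := by fun_prop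
  exact ((hs.add h1).smul continuous_const).add ((hs.add h2).smul continuous_const)

lemma hasFDerivAt_sum_mul_sqrt (p : ℝ × ℝ) :
    HasFDerivAt (fun p : ℝ × ℝ => (p.1 + p.2) * √(p.1 ^ 2 + p.2 ^ 2)) (sumMulSqrtDeriv p) p := by
  by_cases hp : p = 0
  · subst hp
    have h0 : sumMulSqrtDeriv 0 = 0 := by simp [sumMulSqrtDeriv]
    rw [h0]
    -- `|a + b| ≤ 2 ‖p‖` and `√(a² + b²) ≤ 2 ‖p‖` for the sup norm.
    refine HasFDerivAt.of_isLittleO ?_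
    have hO : (fun p : ℝ × ℝ => (p.1 + p.2) * √(p.1 ^ 2 + p.2 ^ 2)) =O[nhds 0]
        fun p => ‖p‖ ^ 2 := by
      refine Asymptotics.IsBigO.of_bound 4 (Filter.Eventually.of_forall fun p => ?_)
      have h1 : |p.1| ≤ ‖p‖ := norm_fst_le p
      have h2 : |p.2| ≤ ‖p‖ := norm_snd_le p
      have hn := norm_nonneg p
      have hs : √(p.1 ^ 2 + p.2 ^ 2) ≤ 2 * ‖p‖ := by
        refine Real.sqrt_le_iff.2 ⟨by positivity, ?_⟩
        nlinarith [sq_le_sq' (abs_le.1 h1).1 (abs_le.1 h1).2,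
          sq_le_sq' (abs_le.1 h2).1 (abs_le.1 h2).2]
      have ha : |p.1 + p.2| ≤ 2 * ‖p‖ := (abs_add_le _ _).trans (by linarith)
      rw [Real.norm_eq_abs, abs_mul, abs_of_nonneg (Real.sqrt_nonneg _), norm_pow, norm_norm]
      calc _ ≤ (2 * ‖p‖) * (2 * ‖p‖) := by gcongr
        _ = _ := by ring
    have ho : (fun p : ℝ × ℝ => ‖p‖ ^ 2) =o[nhds 0] fun p => p :=
      Asymptotics.isLittleO_norm_pow_id one_lt_two
    simpa using hO.trans_isLittleO ho
  · have hpos := sq_add_sq_pos_of_ne hp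
    have hr := (Real.sqrt_pos.2 hpos).ne'
    have ha : HasFDerivAt (fun p : ℝ × ℝ => p.1) (ContinuousLinearMap.fst ℝ ℝ ℝ) p :=
      hasFDerivAt_fst
    have hb : HasFDerivAt (fun p : ℝ × ℝ => p.2) (ContinuousLinearMap.snd ℝ ℝ ℝ) p :=
      hasFDerivAt_snd
    have h := (ha.add hb).mul (((ha.pow 2).add (hb.pow 2)).sqrt hpos.ne')
    refine h.congr_fderiv ?_
    ext <;> simp [sumMulSqrtDeriv] <;> field_simp <;> ring

lemma contDiff_sum_mul_sqrt :
    ContDiff ℝ 1 fun p : ℝ × ℝ => (p.1 + p.2) * √(p.1 ^ 2 + p.2 ^ 2) :=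
  contDiff_one_iff_hasFDerivAt.2
    ⟨sumMulSqrtDeriv, continuous_sumMulSqrtDeriv, hasFDerivAt_sum_mul_sqrt⟩

lemma contDiff_phiFB_sq : ContDiff ℝ 1 fun p : ℝ × ℝ => phiFB p.1 p.2 ^ 2 := by
  have h : (fun p : ℝ × ℝ => phiFB p.1 p.2 ^ 2) = fun p =>
      ((p.1 + p.2) ^ 2 + (p.1 ^ 2 + p.2 ^ 2)) - 2 * ((p.1 + p.2) * √(p.1 ^ 2 + p.2 ^ 2)) := by
    funext p
    have := Real.sq_sqrt (by positivity : 0 ≤ p.1 ^ 2 + p.2 ^ 2)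
    unfold phiFB
    linear_combination this
  rw [h]
  have hpoly : ContDiff ℝ 1 fun p : ℝ × ℝ => (p.1 + p.2) ^ 2 + (p.1 ^ 2 + p.2 ^ 2) := by fun_prop
  exact hpoly.sub (contDiff_const.mul contDiff_sum_mul_sqrt)

/-- the merit function `θ(z,v) = ½‖F(z,v)‖²` is continuously
differentiable on all of `ℝⁿ × ℝ^q` (even though `F` itself is not everywhere
differentiable). -/
theorem statement_15 (n q : ℕ) (H : Matrix (Fin n) (Fin n) ℝ) (hH : H.PosSemidef)
    (A : Matrix (Fin q) (Fin n) ℝ) (f : Fin n → ℝ) (b : Fin q → ℝ) :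
    ContDiff ℝ 1 (meritFB n q H A f b) := by
  unfold meritFB
  refine (contDiff_const.mul (ContDiff.sum fun j _ => ?_)).add
    (contDiff_const.mul (ContDiff.sum fun i _ => ?_))
  · simp only [Pi.add_apply, Matrix.mulVec, dotProduct]
    fun_prop
  · have hy : ContDiff ℝ 1 fun x : (Fin n → ℝ) × (Fin q → ℝ) =>
        (x.2 i, (b - A.mulVec x.1) i) := by
      simp only [Pi.sub_apply, Matrix.mulVec, dotProduct]
      fun_prop
    exact contDiff_phiFB_sq.comp hy
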